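/- Let K ≥ 1 and let a = (a_0, ..., a_K) be a nonzero vector of real numbers that is palindromic, i.e., a_k = a_{K−k} for all 0 ≤ k ≤ K. Then the cosine polynomial C_a(x) = ∑_{k=0}^{K} a_k cos(kx) satisfies Z(C_a) ≥ K, where Z(f) denotes the number of zeros of f in [0, 2π) counted with multiplicity. -/

import Mathlib

/-!
Pairing the terms of index `k` and `K - k` turns a palindromic `C_a x` into
`cos (K x / 2) * ∑ k, a_k cos ((2 k - K) x / 2)`, and the first factor alone has the `K` distinct
zeros `(2 j + 1) π / K`, `j < K`, in `[0, 2π)`. Each is a zero of `C_a` of some finite multiplicity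
at least one, because `C_a` is analytic and, being a nontrivial combination of Chebyshev
polynomials evaluated at `cos x`, not identically zero.
-/

open Real Set
open scoped ENNReal

/-- The multiplicity of a zero `x` of `f`: the least `n ≥ 1` such that the
`n`-th derivative of `f` at `x` is nonzero. -/
noncomputable def zeroMult (f : ℝ → ℝ) (x : ℝ) : ℕ :=
  sInf {n : ℕ | 1 ≤ n ∧ iteratedDeriv n f x ≠ 0}

/-- The number of zeros of `f` in one period `[0, 2π)`, counted with multiplicity. -/
noncomputable def Zcount (f : ℝ → ℝ) : ℝ≥0∞ :=
  ∑' x : {x : ℝ // x ∈ Set.Ico (0 : ℝ) (2 * Real.pi) ∧ f x = 0},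
    (zeroMult f x.1 : ℝ≥0∞)

theorem zeroMult_eq_analyticOrderAt {f : ℝ → ℝ} {x : ℝ} (hf : AnalyticAt ℝ f x) (hx : f x = 0)
    (hfin : analyticOrderAt f x ≠ ⊤) : (zeroMult f x : ℕ∞) = analyticOrderAt f x := by
  obtain ⟨n, hn⟩ := ENat.ne_top_iff_exists.mp hfin
  obtain ⟨hvanish, hne⟩ :=
    (analyticOrderAt_eq_nat_iff_iteratedDeriv_eq_zero hf).mp hn.symm
  have hpos : 1 ≤ n := Nat.one_le_iff_ne_zero.mpr fun h0 => hne (by simpa [h0] using hx)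
  have hleast : IsLeast {m : ℕ | 1 ≤ m ∧ iteratedDeriv m f x ≠ 0} n :=
    ⟨⟨hpos, hne⟩, fun m hm => not_lt.mp fun hlt => hm.2 (hvanish m hlt)⟩
  rw [← hn, zeroMult, hleast.csInf_eq]

theorem one_le_zeroMult {f : ℝ → ℝ} {x : ℝ} (hf : AnalyticAt ℝ f x) (hx : f x = 0)
    (hfin : analyticOrderAt f x ≠ ⊤) : 1 ≤ zeroMult f x := by
  have hpos : 1 ≤ analyticOrderAt f x :=
    Order.one_le_iff_ne_zero.mpr (hf.analyticOrderAt_ne_zero.mpr hx)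
  exact_mod_cast hpos.trans_eq (zeroMult_eq_analyticOrderAt hf hx hfin).symm

theorem encard_zeros_le_Zcount {f : ℝ → ℝ} (hf : ∀ x, AnalyticAt ℝ f x) (hf0 : f ≠ 0) :
    ({x | x ∈ Ico 0 (2 * π) ∧ f x = 0}.encard : ℝ≥0∞) ≤ Zcount f := by
  rw [← ENNReal.tsum_set_one]
  refine ENNReal.tsum_le_tsum fun x => ?_
  have hfin : analyticOrderAt f x ≠ ⊤ :=
    (AnalyticOnNhd.analyticOrderAt_eq_top_iff_eq_zero x.1 hf).not.mpr hf0
  exact_mod_cast one_le_zeroMult (hf x) x.2.2 hfin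

theorem injective_pi_leval_of_infinite_range {R X : Type*} [CommRing R] [IsDomain R] {g : X → R}
    (hg : (range g).Infinite) :
    Function.Injective (LinearMap.pi fun x => Polynomial.leval (g x)) := by
  refine (injective_iff_map_eq_zero _).mpr fun p hp => ?_
  refine Polynomial.eq_zero_of_infinite_isRoot p (hg.mono ?_)
  rintro _ ⟨x, rfl⟩
  exact congrFun hp x

theorem linearIndependent_cos_natCast_mul :
    LinearIndependent ℝ fun (n : ℕ) (x : ℝ) => cos (n * x) := by
  have hT : (fun (n : ℕ) (x : ℝ) => cos (n * x)) =
      LinearMap.pi (fun x => Polynomial.leval (cos x)) ∘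
        Polynomial.Chebyshev.chebyshevTsequence ℝ := by
    ext n x
    exact (Polynomial.Chebyshev.T_real_cos x n).symm
  rw [hT]
  exact (Polynomial.Chebyshev.chebyshevTsequence ℝ).linearIndependent.map_injOn _
    (injective_pi_leval_of_infinite_range range_cos_infinite).injOn

/-- The cosine polynomial `C_a`, the function whose zeros are counted. The coefficients are indexed
from `0`, so `n` of them give degree at most `n - 1`. -/
noncomputable def cosPoly {n : ℕ} (a : Fin n → ℝ) (x : ℝ) : ℝ :=
  ∑ k : Fin n, a k * cos ((k : ℕ) * x)

theorem analyticAt_cosPoly {n : ℕ} (a : Fin n → ℝ) (x : ℝ) : AnalyticAt ℝ (cosPoly a) x := by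
  unfold cosPoly
  fun_prop

theorem cosPoly_ne_zero {n : ℕ} {a : Fin n → ℝ} (ha : a ≠ 0) : cosPoly a ≠ 0 := by
  contrapose! ha
  have hcos := linearIndependent_cos_natCast_mul.comp _ (Fin.val_injective (n := n))
  refine funext (Fintype.linearIndependent_iff.mp hcos a ?_)
  ext x
  simpa [cosPoly] using congrFun ha x

theorem cosPoly_rev {K : ℕ} (a : Fin (K + 1) → ℝ) (x : ℝ) :
    cosPoly (fun k => a k.rev) x = ∑ k : Fin (K + 1), a k * cos ((K - (k : ℕ)) * x) := by
  rw [cosPoly, ← Equiv.sum_comp Fin.revPerm]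
  refine Finset.sum_congr rfl fun k _ => ?_
  have hval : ((k.rev : ℕ) : ℝ) = K - (k : ℕ) := by
    rw [Fin.val_rev, Nat.add_sub_add_right, Nat.cast_sub k.is_le]
  rw [Fin.revPerm_apply, Fin.rev_rev, hval]

theorem cosPoly_eq_cos_mul_of_palindromic {K : ℕ} {a : Fin (K + 1) → ℝ}
    (hpal : ∀ k, a k = a k.rev) (x : ℝ) :
    cosPoly a x = cos (K * x / 2) * ∑ k : Fin (K + 1), a k * cos ((2 * (k : ℕ) - K) * x / 2) := by
  have hrev : cosPoly a x = ∑ k : Fin (K + 1), a k * cos ((K - (k : ℕ)) * x) := by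
    rw [← cosPoly_rev, ← funext hpal]
  have hpair (k : Fin (K + 1)) : a k * cos ((k : ℕ) * x) + a k * cos ((K - (k : ℕ)) * x) =
      2 * (cos (K * x / 2) * (a k * cos ((2 * (k : ℕ) - K) * x / 2))) := by
    rw [← mul_add, cos_add_cos]
    ring_nf
  refine mul_left_cancel₀ (two_ne_zero (α := ℝ)) ?_
  calc 2 * cosPoly a x
      = cosPoly a x + ∑ k : Fin (K + 1), a k * cos ((K - (k : ℕ)) * x) := by
        rw [← hrev, two_mul]
    _ = _ := by
        rw [cosPoly, ← Finset.sum_add_distrib, Finset.mul_sum, Finset.mul_sum]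
        exact Finset.sum_congr rfl fun k _ => hpair k

theorem le_encard_zeros_cos_natCast_mul_div_two (n : ℕ) :
    (n : ℕ∞) ≤ {x | x ∈ Ico 0 (2 * π) ∧ cos (n * x / 2) = 0}.encard := by
  let node : ℕ → ℝ := fun j => (2 * j + 1) * π / n
  have hmaps : node '' Iio n ⊆ {x | x ∈ Ico 0 (2 * π) ∧ cos (n * x / 2) = 0} := by
    rintro _ ⟨j, hj : j < n, rfl⟩
    have hn : (0 : ℝ) < n := mod_cast j.zero_le.trans_lt hj
    have hj' : (j : ℝ) + 1 ≤ n := mod_cast hj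
    refine ⟨⟨by positivity, ?_⟩, cos_eq_zero_iff.mpr ⟨j, ?_⟩⟩
    · rw [div_lt_iff₀ hn]
      nlinarith [pi_pos]
    · simp only [node]
      push_cast
      field_simp
  have hinj : InjOn node (Iio n) := by
    intro i hi j _ hij
    have hn : (n : ℝ) ≠ 0 := mod_cast (i.zero_le.trans_lt hi).ne'
    simpa [node, div_left_inj' hn, pi_ne_zero] using hij
  calc (n : ℕ∞) = (node '' Iio n).encard := by
        rw [hinj.encard_image, ← Finset.coe_range, encard_coe_eq_coe_finsetCard, Finset.card_range]
    _ ≤ _ := encard_le_encard hmaps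

theorem palindromic_coeff_cosine_zero_count (K : ℕ) (hK : 1 ≤ K)
    (a : Fin (K + 1) → ℝ) (ha : a ≠ 0)
    (hpal : ∀ k : Fin (K + 1), a k = a (Fin.rev k)) :
    (K : ℝ≥0∞) ≤ Zcount (fun x => ∑ k : Fin (K + 1), a k * Real.cos ((k : ℕ) * x)) := by
  change (K : ℝ≥0∞) ≤ Zcount (cosPoly a)
  have hzeros : {x | x ∈ Ico 0 (2 * π) ∧ cos (K * x / 2) = 0} ⊆
      {x | x ∈ Ico 0 (2 * π) ∧ cosPoly a x = 0} := fun x hx =>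
    ⟨hx.1, by rw [cosPoly_eq_cos_mul_of_palindromic hpal, hx.2, zero_mul]⟩
  have hcard := (le_encard_zeros_cos_natCast_mul_div_two K).trans (encard_le_encard hzeros)
  calc (K : ℝ≥0∞) ≤ ({x | x ∈ Ico 0 (2 * π) ∧ cosPoly a x = 0}.encard : ℝ≥0∞) := by
        exact_mod_cast ENat.toENNReal_mono hcard
    _ ≤ Zcount (cosPoly a) := encard_zeros_le_Zcount (analyticAt_cosPoly a) (cosPoly_ne_zero ha)
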